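/- arXiv:2212.06777 — 3 statements merged into one kernel-verified Lean document; each statement's English description precedes it below -/
import Mathlib

section
/- Let n ≥ 2 be an integer, γ = 1 − √((n−2)/(2(n−1))), and T = I_n − γ J_n/n. For every y ∈ ℝ^n, setting η = T y and μ_k = Σ_{j=1}^n y_j^k, the following identities hold: Σ_{j=1}^n η_j = (1−γ) μ₁; Σ_{j=1}^n η_j² = μ₂ − γ(2−γ) μ₁²/n; and Σ_{1≤j<k≤n} (η_j + η_k)² = (n−2) μ₂. -/
/-!
Since `(ηⱼ + ηₖ)² = (ηⱼ² + ηⱼ ηₖ) + (ηₖ² + ηₖ ηⱼ)`, the sum over pairs `j < k` is the sum of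
`ηⱼ² + ηⱼ ηₖ` over all ordered pairs with `j ≠ k`, namely `(n - 2) ∑ ηⱼ² + (∑ ηⱼ)²`.
For `η = T y` this equals `(n - 2) μ₂` plus a multiple of `μ₁²` whose coefficient is
`(2 (n - 1) (1 - γ)² - (n - 2)) / n`; the given `γ` is a root of that quadratic.
-/

section PairSums

variable {ι : Type*} [Fintype ι] [LinearOrder ι]

theorem sum_lt_add_swap_eq_sum_sub_sum_diag {M : Type*} [AddCommGroup M] (F : ι → ι → M) :
    ∑ p : ι × ι with p.1 < p.2, (F p.1 p.2 + F p.2 p.1) = ∑ i, ∑ j, F i j - ∑ i, F i i := by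
  let _ : LocallyFiniteOrderTop ι := LocallyFiniteOrderTop.ofIci ι (fun a ↦ {x | a ≤ x}) (by simp)
  let _ : LocallyFiniteOrderBot ι := LocallyFiniteOrderBot.ofIic ι (fun a ↦ {x | x ≤ a}) (by simp)
  calc ∑ p : ι × ι with p.1 < p.2, (F p.1 p.2 + F p.2 p.1)
      = ∑ i, ∑ j ∈ Finset.Ioi i, (F i j + F j i) :=
        Finset.sum_finset_product' _ _ _ (f := fun i j ↦ F i j + F j i) (by simp)
    _ = ∑ i, ∑ j ∈ {i}ᶜ, F i j := Finset.sum_sum_Ioi_add_eq_sum_sum_off_diag fun j i ↦ F i j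
    _ = ∑ i, (∑ j, F i j - F i i) :=
        Finset.sum_congr rfl fun i _ ↦ eq_sub_of_add_eq' (Fintype.sum_eq_add_sum_compl i _).symm
    _ = ∑ i, ∑ j, F i j - ∑ i, F i i := Finset.sum_sub_distrib ..

theorem sum_lt_add_sq {R : Type*} [Ring R] (f : ι → R) :
    ∑ p : ι × ι with p.1 < p.2, (f p.1 + f p.2) ^ 2 =
      ((Fintype.card ι : R) - 2) * ∑ j, f j ^ 2 + (∑ j, f j) ^ 2 := by
  calc ∑ p : ι × ι with p.1 < p.2, (f p.1 + f p.2) ^ 2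
      = ∑ p : ι × ι with p.1 < p.2,
          ((f p.1 ^ 2 + f p.1 * f p.2) + (f p.2 ^ 2 + f p.2 * f p.1)) :=
        Finset.sum_congr rfl fun p _ ↦ by noncomm_ring
    _ = ∑ i, ∑ j, (f i ^ 2 + f i * f j) - ∑ i, (f i ^ 2 + f i * f i) :=
        sum_lt_add_swap_eq_sum_sub_sum_diag fun i j ↦ f i ^ 2 + f i * f j
    _ = (Fintype.card ι * ∑ j, f j ^ 2 + (∑ j, f j) ^ 2) - 2 * ∑ j, f j ^ 2 := by
        simp only [Finset.sum_add_distrib, Finset.sum_const, Finset.card_univ, nsmul_eq_mul,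
          ← Finset.mul_sum, ← Finset.sum_mul, ← pow_two, two_mul]
    _ = ((Fintype.card ι : R) - 2) * ∑ j, f j ^ 2 + (∑ j, f j) ^ 2 := by
        noncomm_ring

end PairSums

section MeanContraction

variable {ι K : Type*} [Fintype ι] [Field K]

/-- The matrix `I - γ J / n`, with `n = card ι` and `J` the all-ones matrix: it scales the mean of a
vector by `1 - γ` and fixes the deviations from the mean. -/
def meanContraction (ι : Type*) {K : Type*} [Fintype ι] [DecidableEq ι] [Field K] (γ : K) :
    Matrix ι ι K :=
  1 - (γ / Fintype.card ι) • Matrix.of fun _ _ ↦ 1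

theorem meanContraction_mulVec_apply [DecidableEq ι] (γ : K) (y : ι → K) (j : ι) :
    (meanContraction ι γ).mulVec y j = y j - γ / Fintype.card ι * ∑ i, y i := by
  rw [meanContraction, Matrix.sub_mulVec, Matrix.one_mulVec, Matrix.smul_mulVec]
  simp [Matrix.mulVec, dotProduct]

theorem sum_meanContraction_mulVec [DecidableEq ι] (hcard : (Fintype.card ι : K) ≠ 0)
    (γ : K) (y : ι → K) :
    ∑ j, (meanContraction ι γ).mulVec y j = (1 - γ) * ∑ j, y j := by
  simp only [meanContraction_mulVec_apply, Finset.sum_sub_distrib, Finset.sum_const,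
    Finset.card_univ, nsmul_eq_mul]
  field_simp

theorem sum_sq_meanContraction_mulVec [DecidableEq ι] (hcard : (Fintype.card ι : K) ≠ 0)
    (γ : K) (y : ι → K) :
    ∑ j, (meanContraction ι γ).mulVec y j ^ 2 =
      ∑ j, y j ^ 2 - γ * (2 - γ) * (∑ j, y j) ^ 2 / Fintype.card ι := by
  simp only [meanContraction_mulVec_apply, sub_sq, Finset.sum_add_distrib,
    Finset.sum_sub_distrib, Finset.sum_const, Finset.card_univ, nsmul_eq_mul,
    ← Finset.sum_mul, ← Finset.mul_sum]
  field_simp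
  ring

theorem sum_lt_add_sq_meanContraction_mulVec [LinearOrder ι] (hcard : (Fintype.card ι : K) ≠ 0)
    (γ : K) (y : ι → K) :
    ∑ p : ι × ι with p.1 < p.2,
        ((meanContraction ι γ).mulVec y p.1 + (meanContraction ι γ).mulVec y p.2) ^ 2 =
      ((Fintype.card ι : K) - 2) * ∑ j, y j ^ 2 +
        (2 * ((Fintype.card ι : K) - 1) * (1 - γ) ^ 2 - ((Fintype.card ι : K) - 2)) /
          Fintype.card ι * (∑ j, y j) ^ 2 := by
  rw [sum_lt_add_sq, sum_meanContraction_mulVec hcard, sum_sq_meanContraction_mulVec hcard]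
  field_simp
  ring

theorem stmt14_general [LinearOrder ι] (hcard : (Fintype.card ι : K) ≠ 0) {γ : K}
    (hγ : 2 * ((Fintype.card ι : K) - 1) * (1 - γ) ^ 2 = (Fintype.card ι : K) - 2) (y : ι → K) :
    ∑ j, (meanContraction ι γ).mulVec y j = (1 - γ) * ∑ j, y j ∧
    ∑ j, (meanContraction ι γ).mulVec y j ^ 2 =
      ∑ j, y j ^ 2 - γ * (2 - γ) * (∑ j, y j) ^ 2 / Fintype.card ι ∧
    ∑ p : ι × ι with p.1 < p.2,
        ((meanContraction ι γ).mulVec y p.1 + (meanContraction ι γ).mulVec y p.2) ^ 2 =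
      ((Fintype.card ι : K) - 2) * ∑ j, y j ^ 2 := by
  refine ⟨sum_meanContraction_mulVec hcard γ y, sum_sq_meanContraction_mulVec hcard γ y, ?_⟩
  rw [sum_lt_add_sq_meanContraction_mulVec hcard, hγ, sub_self, zero_div, zero_mul, add_zero]

end MeanContraction

theorem two_mul_sub_one_mul_sqrt_sq {x : ℝ} (hx : 2 ≤ x) :
    2 * (x - 1) * √((x - 2) / (2 * (x - 1))) ^ 2 = x - 2 := by
  have hpos : 0 < 2 * (x - 1) := by linarith
  rw [Real.sq_sqrt (div_nonneg (sub_nonneg.2 hx) hpos.le), mul_div_cancel₀ _ hpos.ne']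

theorem stmt14 (n : ℕ) (hn : 2 ≤ n) (y : Fin n → ℝ)
    (γ : ℝ) (hγ : γ = 1 - Real.sqrt (((n : ℝ) - 2) / (2 * ((n : ℝ) - 1))))
    (T : Matrix (Fin n) (Fin n) ℝ)
    (hT : T = 1 - (γ / n) • Matrix.of (fun _ _ => (1 : ℝ)))
    (η : Fin n → ℝ) (hη : η = T.mulVec y) :
    (∑ j, η j) = (1 - γ) * ∑ j, y j ∧
    (∑ j, η j ^ 2) = (∑ j, y j ^ 2) - γ * (2 - γ) * (∑ j, y j) ^ 2 / n ∧
    (∑ p ∈ Finset.univ.filter (fun p : Fin n × Fin n => p.1 < p.2),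
        (η p.1 + η p.2) ^ 2) = ((n : ℝ) - 2) * ∑ j, y j ^ 2 := by
  have hcard : (Fintype.card (Fin n) : ℝ) ≠ 0 := by simp only [Fintype.card_fin]; positivity
  have hroot := two_mul_sub_one_mul_sqrt_sq (x := n) (by exact_mod_cast hn)
  subst hη hT hγ
  simpa only [meanContraction, Fintype.card_fin] using
    stmt14_general hcard (by rwa [Fintype.card_fin, sub_sub_cancel]) y
end

section
/- Let n ≥ 2 be an integer, γ = 1 − √((n−2)/(2(n−1))), and T = I_n − γ J_n/n. For every y ∈ ℝ^n, setting η = T y and μ_k = Σ_{j=1}^n y_j^k, one has Σ_{1≤j<k≤n} (η_j + η_k)⁴ = (n−8) μ₄ + 3 μ₂² + ( 4(1−2γ) + 32γ/n ) μ₁ μ₃ − ( 24γ(1−γ)/n + 48γ²/n² ) μ₁² μ₂ + ( 8γ²(1−γ)(3−γ)/n² + 8γ³(4−γ)/n³ ) μ₁⁴. -/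
/-!
Since `(a + b) ^ 4 = g a b + g b a` with `g a b = a ^ 4 + 4 * a ^ 3 * b + 3 * a ^ 2 * b ^ 2`, the
sum over pairs `j < k` is the sum of `g (η j) (η k)` over all ordered pairs, which factors through
the power sums of `η`, minus the diagonal `∑ j, 8 * η j ^ 4`. As `T` only translates `y` by the
scalar `-(γ / n) * μ₁`, the binomial theorem expresses the power sums of `η` in terms of the `μ_k`.
-/

theorem sum_lt_add_swap_add_sum_diag {ι M : Type*} [Fintype ι] [LinearOrder ι] [AddCommMonoid M]
    (g : ι → ι → M) :
    ∑ p : ι × ι with p.1 < p.2, (g p.1 p.2 + g p.2 p.1) + ∑ i, g i i = ∑ i, ∑ j, g i j := by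
  have sum_swap : ∑ p : ι × ι with p.1 < p.2, g p.2 p.1 =
      ∑ p : ι × ι with p.2 < p.1, g p.1 p.2 :=
    Finset.sum_equiv (Equiv.prodComm ι ι) (by simp) (by simp)
  have sum_diag : ∑ i, g i i = ∑ p : ι × ι with p.1 = p.2, g p.1 p.2 := by
    simp [Finset.sum_filter, Fintype.sum_prod_type]
  rw [Finset.sum_add_distrib, sum_swap, sum_diag, ← Fintype.sum_prod_type']
  simp only [Finset.sum_filter, ← Finset.sum_add_distrib]
  refine Finset.sum_congr rfl fun p _ => ?_
  rcases lt_trichotomy p.1 p.2 with h | h | h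
  · simp [h, h.not_gt, h.ne]
  · simp [h]
  · simp [h, h.not_gt, h.ne']

theorem sum_lt_add_pow_four {ι R : Type*} [Fintype ι] [LinearOrder ι] [CommRing R] (x : ι → R) :
    ∑ p : ι × ι with p.1 < p.2, (x p.1 + x p.2) ^ 4 =
      (Fintype.card ι - 8) * ∑ j, x j ^ 4 + 4 * (∑ j, x j) * ∑ j, x j ^ 3 +
        3 * (∑ j, x j ^ 2) ^ 2 := by
  let g (i j : ι) : R := x i ^ 4 + 4 * x i ^ 3 * x j + 3 * x i ^ 2 * x j ^ 2
  have add_pow_four (i j : ι) : (x i + x j) ^ 4 = g i j + g j i := by ring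
  have sum_diag : ∑ i, g i i = 8 * ∑ i, x i ^ 4 := by
    rw [Finset.mul_sum]
    exact Finset.sum_congr rfl fun i _ => by ring
  have sum_all : ∑ i, ∑ j, g i j =
      Fintype.card ι * ∑ j, x j ^ 4 + 4 * (∑ j, x j) * ∑ j, x j ^ 3 + 3 * (∑ j, x j ^ 2) ^ 2 := by
    simp only [g, Finset.sum_add_distrib, ← Finset.mul_sum, ← Finset.sum_mul, Finset.sum_const,
      Finset.card_univ, nsmul_eq_mul]
    ring
  simp only [add_pow_four]
  linear_combination sum_lt_add_swap_add_sum_diag g + sum_all - sum_diag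

section PowerSumsOfTranslate

variable {ι R : Type*} [Fintype ι] [CommRing R] (x : ι → R) (c : R)

theorem sum_sub_const_pow (k : ℕ) :
    ∑ j, (x j - c) ^ k =
      ∑ m ∈ Finset.range (k + 1), (∑ j, x j ^ m) * (-c) ^ (k - m) * k.choose m := by
  simp only [sub_eq_add_neg, add_pow, Finset.sum_mul]
  exact Finset.sum_comm

theorem sum_sub_const_sq :
    ∑ j, (x j - c) ^ 2 = ∑ j, x j ^ 2 - 2 * c * ∑ j, x j + Fintype.card ι * c ^ 2 := by
  simp only [sum_sub_const_pow, Finset.sum_range_succ, Finset.sum_range_zero, pow_zero, pow_one,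
    Finset.sum_const, Finset.card_univ, nsmul_eq_mul, Nat.choose]
  push_cast
  ring

theorem sum_sub_const_cube :
    ∑ j, (x j - c) ^ 3 =
      ∑ j, x j ^ 3 - 3 * c * ∑ j, x j ^ 2 + 3 * c ^ 2 * ∑ j, x j - Fintype.card ι * c ^ 3 := by
  simp only [sum_sub_const_pow, Finset.sum_range_succ, Finset.sum_range_zero, pow_zero, pow_one,
    Finset.sum_const, Finset.card_univ, nsmul_eq_mul, Nat.choose]
  push_cast
  ring

theorem sum_sub_const_pow_four :
    ∑ j, (x j - c) ^ 4 =
      ∑ j, x j ^ 4 - 4 * c * ∑ j, x j ^ 3 + 6 * c ^ 2 * ∑ j, x j ^ 2 - 4 * c ^ 3 * ∑ j, x j +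
        Fintype.card ι * c ^ 4 := by
  simp only [sum_sub_const_pow, Finset.sum_range_succ, Finset.sum_range_zero, pow_zero, pow_one,
    Finset.sum_const, Finset.card_univ, nsmul_eq_mul, Nat.choose]
  push_cast
  ring

end PowerSumsOfTranslate

theorem one_sub_smul_ones_mulVec_apply {ι R : Type*} [Fintype ι] [DecidableEq ι] [Ring R]
    (a : R) (x : ι → R) (j : ι) :
    ((1 - a • Matrix.of fun _ _ => (1 : R) : Matrix ι ι R).mulVec x) j = x j - a * ∑ k, x k := by
  rw [Matrix.sub_mulVec, Matrix.one_mulVec, Matrix.smul_mulVec]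
  simp [Matrix.mulVec, dotProduct]

theorem stmt15_general {ι K : Type*} [Fintype ι] [LinearOrder ι] [Field K] {n : ℕ}
    (hι : Fintype.card ι = n) (hn : (n : K) ≠ 0) (y : ι → K) (γ : K)
    (T : Matrix ι ι K) (hT : T = 1 - (γ / n) • Matrix.of (fun _ _ => (1 : K)))
    (η : ι → K) (hη : η = T.mulVec y) (μ₁ μ₂ μ₃ μ₄ : K)
    (hμ₁ : μ₁ = ∑ j, y j) (hμ₂ : μ₂ = ∑ j, y j ^ 2)
    (hμ₃ : μ₃ = ∑ j, y j ^ 3) (hμ₄ : μ₄ = ∑ j, y j ^ 4) :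
    ∑ p : ι × ι with p.1 < p.2, (η p.1 + η p.2) ^ 4 =
      ((n : K) - 8) * μ₄ + 3 * μ₂ ^ 2 + (4 * (1 - 2 * γ) + 32 * γ / n) * μ₁ * μ₃ -
        (24 * γ * (1 - γ) / n + 48 * γ ^ 2 / (n : K) ^ 2) * μ₁ ^ 2 * μ₂ +
        (8 * γ ^ 2 * (1 - γ) * (3 - γ) / (n : K) ^ 2 +
          8 * γ ^ 3 * (4 - γ) / (n : K) ^ 3) * μ₁ ^ 4 := by
  have η_apply (j : ι) : η j = y j - γ / n * μ₁ := by
    rw [hη, hT, one_sub_smul_ones_mulVec_apply, hμ₁]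
  have sum_η : ∑ j, η j = μ₁ - n * (γ / n * μ₁) := by
    simp only [η_apply, Finset.sum_sub_distrib, Finset.sum_const, Finset.card_univ, hι,
      nsmul_eq_mul, ← hμ₁]
  rw [sum_lt_add_pow_four, sum_η]
  simp only [η_apply, sum_sub_const_sq, sum_sub_const_cube, sum_sub_const_pow_four, hι,
    ← hμ₁, ← hμ₂, ← hμ₃, ← hμ₄]
  field_simp
  ring

theorem stmt15 (n : ℕ) (hn : 2 ≤ n) (y : Fin n → ℝ)
    (γ : ℝ) (hγ : γ = 1 - Real.sqrt (((n : ℝ) - 2) / (2 * ((n : ℝ) - 1))))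
    (T : Matrix (Fin n) (Fin n) ℝ)
    (hT : T = 1 - (γ / n) • Matrix.of (fun _ _ => (1 : ℝ)))
    (η : Fin n → ℝ) (hη : η = T.mulVec y)
    (μ₁ μ₂ μ₃ μ₄ : ℝ)
    (hμ₁ : μ₁ = ∑ j, y j) (hμ₂ : μ₂ = ∑ j, y j ^ 2)
    (hμ₃ : μ₃ = ∑ j, y j ^ 3) (hμ₄ : μ₄ = ∑ j, y j ^ 4) :
    (∑ p ∈ Finset.univ.filter (fun p : Fin n × Fin n => p.1 < p.2),
        (η p.1 + η p.2) ^ 4) =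
      ((n : ℝ) - 8) * μ₄ + 3 * μ₂ ^ 2 + (4 * (1 - 2 * γ) + 32 * γ / n) * μ₁ * μ₃ -
        (24 * γ * (1 - γ) / n + 48 * γ ^ 2 / (n : ℝ) ^ 2) * μ₁ ^ 2 * μ₂ +
        (8 * γ ^ 2 * (1 - γ) * (3 - γ) / (n : ℝ) ^ 2 +
          8 * γ ^ 3 * (4 - γ) / (n : ℝ) ^ 3) * μ₁ ^ 4 :=
  stmt15_general (Fintype.card_fin n) (by positivity) y γ T hT η hη μ₁ μ₂ μ₃ μ₄ hμ₁ hμ₂ hμ₃ hμ₄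
end

section
/- Fix t with 0 < t and (2/3)(2t)² < 1, and fix 0 < δ < 1/4. Let a: (0,∞) → ℝ be any function with a(m) → 2/3 as m → ∞. Then there exist C > 0 and M > 0 such that for all m ≥ M, ∫_{−2t}^{2t} exp( −m x² + a(m) m x⁴ ) dx ≤ √(π/m) ( 1 + C m^{−1+4δ} ). -/
open Real Filter MeasureTheory

/-!
If `A * x ^ 2 ≤ 1 - c` on the domain, then the full exponent `-m * x ^ 2 + A * m * x ^ 4` is at most
`-c * m * x ^ 2`. By `exp u ≤ 1 + u * exp u` with `u = A * m * x ^ 4`, the integrand therefore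
exceeds `exp (-m * x ^ 2)` by at most `|A| * m * x ^ 4 * exp (-c * m * x ^ 2)`, and integrating over
all of `ℝ` this excess is of order `1 / m` relative to the Gaussian integral `√(π / m)`.
-/

theorem exp_le_one_add_mul_exp (u : ℝ) : exp u ≤ 1 + u * exp u := by
  have h : (1 - u) * exp u ≤ exp (-u) * exp u := by
    gcongr
    exact one_sub_le_exp_neg u
  rw [← exp_add, neg_add_cancel, exp_zero] at h
  linarith

theorem pow_four_mul_exp_neg_mul_sq_le {b : ℝ} (hb : 0 < b) (x : ℝ) :
    x ^ 4 * exp (-b * x ^ 2) ≤ 8 / b ^ 2 * exp (-(b / 2) * x ^ 2) := by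
  have quadratic_le : (b / 2 * x ^ 2) ^ 2 ≤ 2 * exp (b / 2 * x ^ 2) := by
    have := quadratic_le_exp_of_nonneg (x := b / 2 * x ^ 2) (by positivity)
    have : 0 ≤ b / 2 * x ^ 2 := by positivity
    linarith
  calc x ^ 4 * exp (-b * x ^ 2)
      = 4 / b ^ 2 * (b / 2 * x ^ 2) ^ 2 * exp (-b * x ^ 2) := by field_simp; ring
    _ ≤ 4 / b ^ 2 * (2 * exp (b / 2 * x ^ 2)) * exp (-b * x ^ 2) := by gcongr
    _ = 8 / b ^ 2 * (exp (b / 2 * x ^ 2) * exp (-b * x ^ 2)) := by ring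
    _ = 8 / b ^ 2 * exp (-(b / 2) * x ^ 2) := by rw [← exp_add]; ring_nf

theorem mul_sq_le_of_mem_Icc {A R q x : ℝ} (hq : 0 ≤ q) (hAR : A * R ^ 2 ≤ q)
    (hx : x ∈ Set.Icc (-R) R) : A * x ^ 2 ≤ q := by
  rcases le_total 0 A with hA | hA
  · have : x ^ 2 ≤ R ^ 2 := sq_le_sq' hx.1 hx.2
    exact le_trans (by gcongr) hAR
  · exact (mul_nonpos_of_nonpos_of_nonneg hA (sq_nonneg x)).trans hq

section QuarticPerturbation

variable {A c m : ℝ}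

theorem exp_neg_mul_sq_add_quartic_le (hc : 0 < c) (hm : 0 < m) {x : ℝ}
    (hx : A * x ^ 2 ≤ 1 - c) :
    exp (-m * x ^ 2 + A * m * x ^ 4) ≤
      exp (-m * x ^ 2) + 8 * |A| / (c ^ 2 * m) * exp (-(c * m / 2) * x ^ 2) := by
  have exponent_le : -m * x ^ 2 + A * m * x ^ 4 ≤ -(c * m) * x ^ 2 := by
    have : m * x ^ 2 * (A * x ^ 2) ≤ m * x ^ 2 * (1 - c) := by gcongr
    linarith
  calc exp (-m * x ^ 2 + A * m * x ^ 4)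
      = exp (-m * x ^ 2) * exp (A * m * x ^ 4) := exp_add _ _
    _ ≤ exp (-m * x ^ 2) * (1 + A * m * x ^ 4 * exp (A * m * x ^ 4)) := by
        gcongr
        exact exp_le_one_add_mul_exp _
    _ = exp (-m * x ^ 2) + A * m * x ^ 4 * exp (-m * x ^ 2 + A * m * x ^ 4) := by
        rw [exp_add]; ring
    _ ≤ exp (-m * x ^ 2) + |A| * m * x ^ 4 * exp (-(c * m) * x ^ 2) := by
        gcongr
        exact le_abs_self A
    _ = exp (-m * x ^ 2) + |A| * m * (x ^ 4 * exp (-(c * m) * x ^ 2)) := by ring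
    _ ≤ exp (-m * x ^ 2) +
          |A| * m * (8 / (c * m) ^ 2 * exp (-(c * m / 2) * x ^ 2)) := by
        gcongr _ + _ * ?_
        exact pow_four_mul_exp_neg_mul_sq_le (mul_pos hc hm) x
    _ = exp (-m * x ^ 2) + 8 * |A| / (c ^ 2 * m) * exp (-(c * m / 2) * x ^ 2) := by
        field_simp

theorem setIntegral_exp_neg_mul_sq_add_quartic_le (hc : 0 < c) (hm : 0 < m) {s : Set ℝ}
    (hs : MeasurableSet s) (hAs : ∀ x ∈ s, A * x ^ 2 ≤ 1 - c) :
    ∫ x in s, exp (-m * x ^ 2 + A * m * x ^ 4) ≤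
      √(π / m) * (1 + 8 * |A| / c ^ 2 * √(2 / c) * m⁻¹) := by
  have main_integrable := integrable_exp_neg_mul_sq hm
  have error_integrable :=
    (integrable_exp_neg_mul_sq (half_pos (mul_pos hc hm))).const_mul (8 * |A| / (c ^ 2 * m))
  have sum_integrable : Integrable fun x : ℝ => exp (-m * x ^ 2) +
      8 * |A| / (c ^ 2 * m) * exp (-(c * m / 2) * x ^ 2) := main_integrable.add error_integrable
  calc ∫ x in s, exp (-m * x ^ 2 + A * m * x ^ 4)
      ≤ ∫ x in s, (exp (-m * x ^ 2) +
          8 * |A| / (c ^ 2 * m) * exp (-(c * m / 2) * x ^ 2)) :=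
        integral_mono_of_nonneg (ae_of_all _ fun x => (exp_pos _).le) sum_integrable.integrableOn
          (ae_restrict_of_forall_mem hs fun x hx =>
            exp_neg_mul_sq_add_quartic_le hc hm (hAs x hx))
    _ ≤ ∫ x, (exp (-m * x ^ 2) + 8 * |A| / (c ^ 2 * m) * exp (-(c * m / 2) * x ^ 2)) :=
        setIntegral_le_integral sum_integrable (ae_of_all _ fun x => by positivity)
    _ = √(π / m) + 8 * |A| / (c ^ 2 * m) * √(π / (c * m / 2)) := by
        rw [integral_add main_integrable error_integrable, integral_const_mul, integral_gaussian,
          integral_gaussian]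
    _ = √(π / m) + 8 * |A| / (c ^ 2 * m) * (√(π / m) * √(2 / c)) := by
        rw [← sqrt_mul (by positivity)]
        congr 3
        field_simp
    _ = √(π / m) * (1 + 8 * |A| / c ^ 2 * √(2 / c) * m⁻¹) := by
        field_simp

end QuarticPerturbation

theorem stmt18_general {L R p : ℝ} (hLR : L * R ^ 2 < 1) (hp : -1 ≤ p)
    {a : ℝ → ℝ} (ha : Tendsto a atTop (nhds L)) :
    ∃ C > 0, ∃ M > 0, ∀ m ≥ M,
      ∫ x in Set.Icc (-R) R, exp (-m * x ^ 2 + a m * m * x ^ 4) ≤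
        √(π / m) * (1 + C * m ^ p) := by
  obtain ⟨c, hc, hc1, hLRc⟩ : ∃ c > 0, c < 1 ∧ c < 1 - L * R ^ 2 := by
    simpa only [lt_min_iff] using exists_between (lt_min one_pos (sub_pos.mpr hLR))
  have abs_lt : ∀ᶠ m in atTop, |a m| < |L| + 1 := ha.abs.eventually_lt_const (lt_add_one _)
  have mul_sq_lt : ∀ᶠ m in atTop, a m * R ^ 2 < 1 - c :=
    (ha.mul_const (R ^ 2)).eventually_lt_const (lt_sub_comm.mp hLRc)
  obtain ⟨M, hM⟩ := eventually_atTop.mp (abs_lt.and mul_sq_lt)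
  refine ⟨8 * (|L| + 1) / c ^ 2 * √(2 / c), by positivity, max M 1, by positivity, fun m hm => ?_⟩
  obtain ⟨ham, hamR⟩ := hM m (le_of_max_le_left hm)
  have one_le : 1 ≤ m := le_of_max_le_right hm
  have mul_sq_le : ∀ x ∈ Set.Icc (-R) R, a m * x ^ 2 ≤ 1 - c := fun x hx =>
    mul_sq_le_of_mem_Icc (sub_pos.mpr hc1).le hamR.le hx
  have inv_le : m⁻¹ ≤ m ^ p := by
    simpa only [rpow_neg_one] using rpow_le_rpow_of_exponent_le one_le hp
  calc ∫ x in Set.Icc (-R) R, exp (-m * x ^ 2 + a m * m * x ^ 4)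
      ≤ √(π / m) * (1 + 8 * |a m| / c ^ 2 * √(2 / c) * m⁻¹) :=
        setIntegral_exp_neg_mul_sq_add_quartic_le hc (by positivity) measurableSet_Icc mul_sq_le
    _ ≤ √(π / m) * (1 + 8 * (|L| + 1) / c ^ 2 * √(2 / c) * m ^ p) := by gcongr

theorem stmt18 (t δ : ℝ) (ht : 0 < t) (ht2 : (2 / 3) * (2 * t) ^ 2 < 1)
    (hδ1 : 0 < δ) (hδ2 : δ < 1 / 4)
    (a : ℝ → ℝ) (ha : Tendsto a atTop (nhds (2 / 3))) :
    ∃ C > 0, ∃ M > 0, ∀ m ≥ M,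
      (∫ x in Set.Icc (-(2 * t)) (2 * t),
          Real.exp (-m * x ^ 2 + a m * m * x ^ 4)) ≤
        Real.sqrt (π / m) * (1 + C * m ^ (-1 + 4 * δ)) :=
  stmt18_general ht2 (by linarith) ha
end
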